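/- Let q = p^m with p prime and m ≥ 1, and let k be a positive divisor of q−1. If Spec(Γ(k,q)) ⊆ ℤ, where Γ(k,q) is the generalized Paley graph over GaloisField p m, then for every a ≥ 1 one has Spec(Γ(k·(q^a−1)/(q−1), q^a)) ⊆ ℤ, where Γ(k·(q^a−1)/(q−1), q^a) is the generalized Paley graph over GaloisField p (m·a). -/

import Mathlib

open scoped Classical

noncomputable instance (p n : ℕ) [Fact p.Prime] : Fintype (GaloisField p n) :=
  Fintype.ofFinite _

/-! The norm of the extension `𝔽_{q^a} / 𝔽_q` is the power map `z ↦ z ^ ((q^a - 1) / (q - 1))`, and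
it is surjective. Hence the connection set of `Γ(k(q^a - 1)/(q - 1), q^a)` is the set of nonzero
`k`-th powers of the subfield `𝔽_q`, so no arc leaves a coset of `𝔽_q` in `𝔽_{q^a}`: the larger
graph is a disjoint union of copies of `Γ(k, q)`, one for each coset, and so has the same
spectrum. -/

theorem spectrum_blockDiagonal {R n ι : Type*} [CommRing R] [Fintype n] [DecidableEq n]
    [Fintype ι] [DecidableEq ι] (M : ι → Matrix n n R) :
    spectrum R (Matrix.blockDiagonal M) = ⋃ i, spectrum R (M i) := by
  ext r
  have resolvent_eq : algebraMap R (Matrix (n × ι) (n × ι) R) r - Matrix.blockDiagonal M =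
      Matrix.blockDiagonal fun i => algebraMap R (Matrix n n R) r - M i := by
    simp only [Algebra.algebraMap_eq_smul_one, ← Matrix.blockDiagonal_one,
      ← Matrix.blockDiagonal_smul, ← Matrix.blockDiagonal_sub]
    rfl
  simp only [Set.mem_iUnion, spectrum.mem_iff, resolvent_eq, Matrix.isUnit_iff_isUnit_det,
    Matrix.det_blockDiagonal, IsUnit.prod_univ_iff, not_forall]

section Cayley

/-- The adjacency matrix of the Cayley digraph of the additive group `G` with connection set `S`:
there is an arc from `x` to `y` iff `y - x ∈ S`. -/
noncomputable def cayleyMatrix (R : Type*) {G : Type*} [Zero R] [One R] [Sub G] (S : Set G) :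
    Matrix G G R :=
  Matrix.of fun x y => if y - x ∈ S then 1 else 0

variable {G H : Type*} [AddCommGroup G] [AddCommGroup H] {f : H →+ G}

theorem bijective_quotient_out_add_apply (hf : Function.Injective f) :
    Function.Bijective fun t : H × (G ⧸ f.range) => t.2.out + f t.1 := by
  have mk_out_add (h : H) (c : G ⧸ f.range) : ((c.out + f h : G) : G ⧸ f.range) = c := by simp
  constructor
  · rintro ⟨h, c⟩ ⟨h', c'⟩ heq
    obtain rfl : c = c' := by
      rw [← mk_out_add h c, ← mk_out_add h' c']
      exact congrArg _ heq
    exact congrArg (·, c) (hf (add_left_cancel heq))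
  · intro x
    obtain ⟨h, hh⟩ : -(x : G ⧸ f.range).out + x ∈ f.range :=
      QuotientAddGroup.eq.mp (QuotientAddGroup.out_eq' _)
    exact ⟨(h, x), by simp [hh]⟩

theorem cayleyMatrix_image_submatrix (R : Type*) [Zero R] [One R] [DecidableEq (G ⧸ f.range)]
    (hf : Function.Injective f) (S : Set H) :
    (cayleyMatrix R (f '' S)).submatrix (fun t : H × (G ⧸ f.range) => t.2.out + f t.1)
        (fun t => t.2.out + f t.1) =
      Matrix.blockDiagonal fun _ => cayleyMatrix R S := by
  ext ⟨h, c⟩ ⟨h', c'⟩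
  rw [Matrix.blockDiagonal_apply', Matrix.submatrix_apply]
  split_ifs with hc
  · subst hc
    have sub_eq : c.out + f h' - (c.out + f h) = f (h' - h) := by rw [map_sub]; abel
    simp only [cayleyMatrix, Matrix.of_apply, sub_eq, hf.mem_set_image]
  · refine if_neg ?_
    rintro ⟨s, -, hs⟩
    have out_sub_mem : -c.out + c'.out ∈ f.range :=
      ⟨s + h - h', by rw [map_sub, map_add, hs]; abel⟩
    exact hc (by simpa using QuotientAddGroup.eq.mpr out_sub_mem)

theorem spectrum_cayleyMatrix_image (R : Type*) [CommRing R] [Fintype G] [DecidableEq G]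
    [Fintype H] [DecidableEq H] (hf : Function.Injective f) (S : Set H) :
    spectrum R (cayleyMatrix R (f '' S)) = spectrum R (cayleyMatrix R S) := by
  let e : H × (G ⧸ f.range) ≃ G := Equiv.ofBijective _ (bijective_quotient_out_add_apply hf)
  calc spectrum R (cayleyMatrix R (f '' S))
      = spectrum R ((cayleyMatrix R (f '' S)).submatrix e e) :=
        (AlgEquiv.spectrum_eq (Matrix.reindexAlgEquiv R R e.symm) _).symm
    _ = spectrum R (Matrix.blockDiagonal fun _ : G ⧸ f.range => cayleyMatrix R S) :=
        congrArg _ (cayleyMatrix_image_submatrix R hf S)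
    _ = spectrum R (cayleyMatrix R S) := by rw [spectrum_blockDiagonal, Set.iUnion_const]

end Cayley

section FiniteField

/-- The set `R_k` of nonzero `k`-th powers. -/
def nonzeroPowers (K : Type*) [MonoidWithZero K] (k : ℕ) : Set K :=
  {x | ∃ z : K, z ≠ 0 ∧ z ^ k = x}

/-- The adjacency matrix of the generalized Paley graph `Γ(k, q)` over the field `K` with `q`
elements. -/
noncomputable abbrev gpMatrix (R K : Type*) [Zero R] [One R] [Ring K] (k : ℕ) : Matrix K K R :=
  cayleyMatrix R (nonzeroPowers K k)

variable {K L : Type*} [Field K] [Field L] [Finite L]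

theorem nonzeroPowers_mul_eq_image [Algebra K L] (k : ℕ) :
    nonzeroPowers L (k * ((Nat.card L - 1) / (Nat.card K - 1))) =
      algebraMap K L '' nonzeroPowers K k := by
  have pow_eq_norm_pow (z : L) : z ^ (k * ((Nat.card L - 1) / (Nat.card K - 1))) =
      algebraMap K L (Algebra.norm K z ^ k) := by
    rw [map_pow, FiniteField.algebraMap_norm_eq_pow, mul_comm k, pow_mul]
  ext x
  constructor
  · rintro ⟨z, hz, rfl⟩
    exact ⟨_, ⟨_, Algebra.norm_ne_zero_iff.mpr hz, rfl⟩, (pow_eq_norm_pow z).symm⟩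
  · rintro ⟨_, ⟨w, hw, rfl⟩, rfl⟩
    obtain ⟨z, rfl⟩ := FiniteField.norm_surjective K L w
    exact ⟨z, Algebra.norm_ne_zero_iff.mp hw, pow_eq_norm_pow z⟩

theorem nonempty_ringHom_of_natCard_eq_pow [Finite K] {a : ℕ}
    (hcard : Nat.card L = Nat.card K ^ a) : Nonempty (K →+* L) := by
  obtain ⟨p, _⟩ := CharP.exists K
  have : Fact p.Prime := ⟨CharP.char_is_prime K p⟩
  let := ZMod.algebra K p
  have natCard_K : Nat.card K = p ^ Module.finrank (ZMod p) K :=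
    (FiniteField.pow_finrank_eq_natCard p K).symm
  have charP_L : CharP L p := by
    refine (CharP.charP_iff_prime_eq_zero Fact.out).mpr ?_
    have natCard_L_cast : (Nat.card L : L) = 0 := by
      have := Fintype.ofFinite L
      rw [Nat.card_eq_fintype_card, FiniteField.cast_card_eq_zero]
    rw [hcard, natCard_K, ← pow_mul, Nat.cast_pow] at natCard_L_cast
    exact eq_zero_of_pow_eq_zero natCard_L_cast
  let := ZMod.algebra L p
  have finrank_L : Module.finrank (ZMod p) L = Module.finrank (ZMod p) K * a := by
    apply Nat.pow_right_injective (Fact.out : p.Prime).two_le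
    simp only [pow_mul, ← natCard_K, ← hcard, FiniteField.pow_finrank_eq_natCard]
  obtain ⟨g⟩ : Nonempty (K →ₐ[ZMod p] L) :=
    FiniteField.nonempty_algHom_of_finrank_dvd ⟨a, finrank_L⟩
  exact ⟨g.toRingHom⟩

end FiniteField

theorem gpGraph_integral_towers_general (R : Type*) [CommRing R] {K L : Type*} [Field K] [Fintype K]
    [DecidableEq K] [Field L] [Fintype L] [DecidableEq L] {q a : ℕ} (hK : Nat.card K = q)
    (hL : Nat.card L = q ^ a) (k : ℕ) :
    spectrum R (gpMatrix R L (k * ((q ^ a - 1) / (q - 1)))) = spectrum R (gpMatrix R K k) := by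
  subst hK
  obtain ⟨g⟩ := nonempty_ringHom_of_natCard_eq_pow hL
  let := g.toAlgebra
  rw [← hL, gpMatrix, nonzeroPowers_mul_eq_image]
  exact spectrum_cayleyMatrix_image R (f := (algebraMap K L).toAddMonoidHom)
    (algebraMap K L).injective _

theorem gpGraph_integral_towers
    (p m k : ℕ) [Fact p.Prime] (hm : 1 ≤ m) (hk : 0 < k)
    (hkdvd : k ∣ p ^ m - 1)
    (A : Matrix (GaloisField p m) (GaloisField p m) ℂ)
    (hA : ∀ x y, A x y = if ∃ z, z ≠ 0 ∧ z ^ k = y - x then 1 else 0)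
    (hspec : spectrum ℂ A ⊆ Set.range ((↑) : ℤ → ℂ)) :
    ∀ a : ℕ, 1 ≤ a →
      ∀ B : Matrix (GaloisField p (m * a)) (GaloisField p (m * a)) ℂ,
        (∀ x y, B x y =
          if ∃ z, z ≠ 0 ∧ z ^ (k * (((p ^ m) ^ a - 1) / (p ^ m - 1))) = y - x
          then 1 else 0) →
        spectrum ℂ B ⊆ Set.range ((↑) : ℤ → ℂ) := by
  intro a ha B hB
  obtain rfl : A = gpMatrix ℂ _ k := by ext x y; rw [hA]; congr
  obtain rfl : B = gpMatrix ℂ _ _ := by ext x y; rw [hB]; congr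
  have hL : Nat.card (GaloisField p (m * a)) = (p ^ m) ^ a := by
    rw [GaloisField.card p _ (by positivity), pow_mul]
  rwa [gpGraph_integral_towers_general ℂ (GaloisField.card p m (by positivity)) hL]
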